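/- Under assumptions (H1)–(H3), for every R1, R2 > 0 there exist constants T0 > 0 and P > 0, depending only on R1, R2 and the data, such that for every x ∈ B(0,R1) ⊆ ℝ^N, every y, z ∈ B(0,R2) ⊆ ℝ^M, and every ε ∈ (0,1], there are a control α, a trajectory (ξ_ε, η_ε) of (CD_ε) with (ξ_ε(0), η_ε(0)) = (x,y), and a time T_ε with T0 < T_ε < 3 T0 such that |η_ε(T_ε) − z| ≤ P ε. -/

import Mathlib

open Set MeasureTheory Metric Filter
open scoped RealInnerProductSpace Topology

noncomputable section

/-- `ℝ^n` with the Euclidean structure. -/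
abbrev Euc (n : ℕ) : Type := EuclideanSpace ℝ (Fin n)

/-- A control: a measurable map with values in the control set `A`. -/
def IsControl {k : ℕ} (A : Set (Euc k)) (α : ℝ → Euc k) : Prop :=
  Measurable α ∧ ∀ t, α t ∈ A

/-- `(ξ, η)` is a trajectory of the controlled dynamics `(CD_ε)` for the control `α`:
this is the integral form, equivalent to `(ξ, η)` being locally absolutely continuous
with `ξ' = ε f(ξ, η, α)` and `η' = g(ξ, η, α)` a.e. on `[0, ∞)`. -/
def IsTrajectory {N M k : ℕ}
    (f : Euc N → Euc M → Euc k → Euc N) (g : Euc N → Euc M → Euc k → Euc M)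
    (ε : ℝ) (α : ℝ → Euc k) (ξ : ℝ → Euc N) (η : ℝ → Euc M) : Prop :=
  (∀ t, 0 ≤ t → IntervalIntegrable (fun s => f (ξ s) (η s) (α s)) volume 0 t) ∧
  (∀ t, 0 ≤ t → IntervalIntegrable (fun s => g (ξ s) (η s) (α s)) volume 0 t) ∧
  (∀ t, 0 ≤ t → ξ t = ξ 0 + ε • ∫ s in (0:ℝ)..t, f (ξ s) (η s) (α s)) ∧
  (∀ t, 0 ≤ t → η t = η 0 + ∫ s in (0:ℝ)..t, g (ξ s) (η s) (α s))

/-- The value function `V^ε(x, y, t)` of the singularly perturbed optimal control problem. -/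
def valueFun {N M k : ℕ} (A : Set (Euc k))
    (f : Euc N → Euc M → Euc k → Euc N) (g : Euc N → Euc M → Euc k → Euc M)
    (ℓ : Euc N → Euc M → Euc k → ℝ) (u0 : Euc N → Euc M → ℝ)
    (ε : ℝ) (x : Euc N) (y : Euc M) (t : ℝ) : ℝ :=
  sInf { v : ℝ | ∃ (α : ℝ → Euc k) (ξ : ℝ → Euc N) (η : ℝ → Euc M),
    IsControl A α ∧ IsTrajectory f g ε α ξ η ∧ ξ 0 = x ∧ η 0 = y ∧
    IntervalIntegrable (fun s => ℓ (ξ s) (η s) (α s)) volume 0 (t / ε) ∧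
    v = ε * (∫ s in (0:ℝ)..(t / ε), ℓ (ξ s) (η s) (α s)) + u0 (ξ (t / ε)) (η (t / ε)) }

/-- The Hamiltonian `H(x,y,p,q) = max_{a ∈ A} { -p·f(x,y,a) - q·g(x,y,a) - ℓ(x,y,a) }`. -/
def Ham {N M k : ℕ} (A : Set (Euc k))
    (f : Euc N → Euc M → Euc k → Euc N) (g : Euc N → Euc M → Euc k → Euc M)
    (ℓ : Euc N → Euc M → Euc k → ℝ)
    (x : Euc N) (y : Euc M) (p : Euc N) (q : Euc M) : ℝ :=
  sSup ((fun a => -⟪p, f x y a⟫ - ⟪q, g x y a⟫ - ℓ x y a) '' A)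

/-- Viscosity subsolution of the stationary equation `G(y, Du) = b` on `Ω`. -/
def IsVSubOn {m : ℕ} (G : Euc m → Euc m → ℝ) (b : ℝ) (Ω : Set (Euc m)) (u : Euc m → ℝ) : Prop :=
  UpperSemicontinuousOn u Ω ∧
  ∀ ψ : Euc m → ℝ, ContDiff ℝ 1 ψ → ∀ y ∈ Ω,
    IsLocalMaxOn (fun z => u z - ψ z) Ω y → G y (gradient ψ y) ≤ b

/-- Viscosity supersolution of the stationary equation `G(y, Du) = b` on `Ω`. -/
def IsVSupOn {m : ℕ} (G : Euc m → Euc m → ℝ) (b : ℝ) (Ω : Set (Euc m)) (u : Euc m → ℝ) : Prop :=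
  LowerSemicontinuousOn u Ω ∧
  ∀ ψ : Euc m → ℝ, ContDiff ℝ 1 ψ → ∀ y ∈ Ω,
    IsLocalMinOn (fun z => u z - ψ z) Ω y → b ≤ G y (gradient ψ y)

/-- The set of levels `b` for which `F(y, Du) = b` has a viscosity subsolution on `ℝ^m`. -/
def subsolLevels {m : ℕ} (F : Euc m → Euc m → ℝ) : Set ℝ :=
  { b : ℝ | ∃ u : Euc m → ℝ, IsVSubOn F b univ u }

/-- The critical value of a Hamiltonian `F` on `ℝ^m`. -/
def critVal {m : ℕ} (F : Euc m → Euc m → ℝ) : ℝ :=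
  sInf (subsolLevels F)

/-- The effective Hamiltonian `H̄(x, p)`. -/
def effH {N M k : ℕ} (A : Set (Euc k))
    (f : Euc N → Euc M → Euc k → Euc N) (g : Euc N → Euc M → Euc k → Euc M)
    (ℓ : Euc N → Euc M → Euc k → ℝ) (x : Euc N) (p : Euc N) : ℝ :=
  critVal (fun (y q : Euc M) => Ham A f g ℓ x y p q)

/-- The frozen Hamiltonian `H₀(y, q) = H(x₀, y, p₀, q)` of the cell problem. -/
def cellH {N M k : ℕ} (A : Set (Euc k))
    (f : Euc N → Euc M → Euc k → Euc N) (g : Euc N → Euc M → Euc k → Euc M)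
    (ℓ : Euc N → Euc M → Euc k → ℝ) (x0 p0 : Euc N) : Euc M → Euc M → ℝ :=
  fun y q => Ham A f g ℓ x0 y p0 q

/-- Viscosity subsolution of `u_t + G(x, D_x u) = 0` on `Ω ⊆ ℝ^n × ℝ`. -/
def IsParabSubOn {n : ℕ} (G : Euc n → Euc n → ℝ) (Ω : Set (Euc n × ℝ)) (u : Euc n × ℝ → ℝ) : Prop :=
  UpperSemicontinuousOn u Ω ∧
  ∀ ψ : Euc n × ℝ → ℝ, ContDiff ℝ 1 ψ → ∀ z ∈ Ω,
    IsLocalMaxOn (fun w => u w - ψ w) Ω z →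
    deriv (fun s => ψ (z.1, s)) z.2 + G z.1 (gradient (fun x => ψ (x, z.2)) z.1) ≤ 0

/-- Viscosity supersolution of `u_t + G(x, D_x u) = 0` on `Ω ⊆ ℝ^n × ℝ`. -/
def IsParabSupOn {n : ℕ} (G : Euc n → Euc n → ℝ) (Ω : Set (Euc n × ℝ)) (u : Euc n × ℝ → ℝ) : Prop :=
  LowerSemicontinuousOn u Ω ∧
  ∀ ψ : Euc n × ℝ → ℝ, ContDiff ℝ 1 ψ → ∀ z ∈ Ω,
    IsLocalMinOn (fun w => u w - ψ w) Ω z →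
    0 ≤ deriv (fun s => ψ (z.1, s)) z.2 + G z.1 (gradient (fun x => ψ (x, z.2)) z.1)

/-- Viscosity subsolution of `u_t + H(x, y, D_x u, D_y u / ε) = 0` on `Ω ⊆ (ℝ^N × ℝ^M) × ℝ`. -/
def IsHJSubOn {N M : ℕ} (Hm : Euc N → Euc M → Euc N → Euc M → ℝ) (ε : ℝ)
    (Ω : Set ((Euc N × Euc M) × ℝ)) (u : (Euc N × Euc M) × ℝ → ℝ) : Prop :=
  UpperSemicontinuousOn u Ω ∧
  ∀ ψ : (Euc N × Euc M) × ℝ → ℝ, ContDiff ℝ 1 ψ → ∀ z ∈ Ω,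
    IsLocalMaxOn (fun w => u w - ψ w) Ω z →
    deriv (fun s => ψ (z.1, s)) z.2 +
      Hm z.1.1 z.1.2 (gradient (fun x => ψ ((x, z.1.2), z.2)) z.1.1)
        (ε⁻¹ • gradient (fun y => ψ ((z.1.1, y), z.2)) z.1.2) ≤ 0

/-- Viscosity supersolution of `u_t + H(x, y, D_x u, D_y u / ε) = 0` on `Ω`. -/
def IsHJSupOn {N M : ℕ} (Hm : Euc N → Euc M → Euc N → Euc M → ℝ) (ε : ℝ)
    (Ω : Set ((Euc N × Euc M) × ℝ)) (u : (Euc N × Euc M) × ℝ → ℝ) : Prop :=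
  LowerSemicontinuousOn u Ω ∧
  ∀ ψ : (Euc N × Euc M) × ℝ → ℝ, ContDiff ℝ 1 ψ → ∀ z ∈ Ω,
    IsLocalMinOn (fun w => u w - ψ w) Ω z →
    0 ≤ deriv (fun s => ψ (z.1, s)) z.2 +
      Hm z.1.1 z.1.2 (gradient (fun x => ψ ((x, z.1.2), z.2)) z.1.1)
        (ε⁻¹ • gradient (fun y => ψ ((z.1.1, y), z.2)) z.1.2)

/-- The upper weak semilimit `(limsup^# V^ε)(z)`. -/
def upperLim {Z : Type*} [TopologicalSpace Z] (V : ℝ → Z → ℝ) (z : Z) : ℝ :=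
  sSup { l : ℝ | ∃ (e : ℕ → ℝ) (w : ℕ → Z), (∀ n, 0 < e n) ∧
    Tendsto e atTop (𝓝 0) ∧ Tendsto w atTop (𝓝 z) ∧
    l = Filter.limsup (fun n => V (e n) (w n)) atTop }

/-- The lower weak semilimit `(liminf_# V^ε)(z)`. -/
def lowerLim {Z : Type*} [TopologicalSpace Z] (V : ℝ → Z → ℝ) (z : Z) : ℝ :=
  sInf { l : ℝ | ∃ (e : ℕ → ℝ) (w : ℕ → Z), (∀ n, 0 < e n) ∧
    Tendsto e atTop (𝓝 0) ∧ Tendsto w atTop (𝓝 z) ∧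
    l = Filter.liminf (fun n => V (e n) (w n)) atTop }

/-- The lower semicontinuous envelope `φ_#`. -/
def lscEnvelope {X : Type*} [TopologicalSpace X] (φ : X → ℝ) (x : X) : ℝ :=
  Filter.liminf φ (𝓝 x)

/-- Local equiboundedness of the family of value functions. -/
def LocEquibounded {N M : ℕ} (V : ℝ → Euc N → Euc M → ℝ → ℝ) : Prop :=
  ∀ C : Set (Euc N × Euc M × ℝ), Bornology.IsBounded C →
    ∃ Mb : ℝ, ∀ ε : ℝ, 0 < ε → ∀ z ∈ C, 0 ≤ z.2.2 → |V ε z.1 z.2.1 z.2.2| ≤ Mb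

/-- The sublevel set `Z_b(y)` of a Hamiltonian. -/
def sublevel {m : ℕ} (G : Euc m → Euc m → ℝ) (b : ℝ) (y : Euc m) : Set (Euc m) :=
  { q | G y q ≤ b }

/-- The support function `σ_b(y, v)` of the sublevel `Z_b(y)`. -/
def suppFn {m : ℕ} (G : Euc m → Euc m → ℝ) (b : ℝ) (y v : Euc m) : ℝ :=
  sSup ((fun q => ⟪q, v⟫) '' sublevel G b y)

/-- The intrinsic length of a curve (Lipschitz curves are differentiable a.e.). -/
def intrinsicLen {m : ℕ} (G : Euc m → Euc m → ℝ) (b : ℝ) (ξ : ℝ → Euc m) : ℝ :=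
  ∫ s in (0:ℝ)..1, suppFn G b (ξ s) (deriv ξ s)

/-- Admissible (Lipschitz) curves on `[0,1]` joining `y₁` to `y₂`. -/
def IsAdmCurve {m : ℕ} (ξ : ℝ → Euc m) (y₁ y₂ : Euc m) : Prop :=
  (∃ Kl : NNReal, LipschitzWith Kl ξ) ∧ ξ 0 = y₁ ∧ ξ 1 = y₂

/-- The intrinsic distance `S_b(y₁, y₂)`. -/
def intrinsicDist {m : ℕ} (G : Euc m → Euc m → ℝ) (b : ℝ) (y₁ y₂ : Euc m) : ℝ :=
  sInf { L : ℝ | ∃ ξ : ℝ → Euc m, IsAdmCurve ξ y₁ y₂ ∧ L = intrinsicLen G b ξ }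

/-- The weighted intrinsic length associated with a weight `h`. -/
def wIntrinsicLen {m : ℕ} (G : Euc m → Euc m → ℝ) (b : ℝ) (h : Euc m → ℝ) (ξ : ℝ → Euc m) : ℝ :=
  ∫ s in (0:ℝ)..1, h (ξ s) * suppFn G b (ξ s) (deriv ξ s)

/-- The weighted intrinsic distance `S_b^h(y₁, y₂)`. -/
def wIntrinsicDist {m : ℕ} (G : Euc m → Euc m → ℝ) (b : ℝ) (h : Euc m → ℝ) (y₁ y₂ : Euc m) : ℝ :=
  sInf { L : ℝ | ∃ ξ : ℝ → Euc m, IsAdmCurve ξ y₁ y₂ ∧ L = wIntrinsicLen G b h ξ }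

/-- The intrinsic critical distance `S(y₁, y₂)` of the cell problem at `(x₀, p₀)`. -/
def cellS {N M k : ℕ} (A : Set (Euc k))
    (f : Euc N → Euc M → Euc k → Euc N) (g : Euc N → Euc M → Euc k → Euc M)
    (ℓ : Euc N → Euc M → Euc k → ℝ) (x0 p0 : Euc N) (y₁ y₂ : Euc M) : ℝ :=
  intrinsicDist (cellH A f g ℓ x0 p0) (effH A f g ℓ x0 p0) y₁ y₂

/-- The Aubry set of `G` at the level `c`: points near which no global viscosity
subsolution of `G(y, Du) = c` is strict. -/
def AubrySet {m : ℕ} (G : Euc m → Euc m → ℝ) (c : ℝ) : Set (Euc m) :=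
  { y₀ | ¬ ∃ (u : Euc m → ℝ) (δ : ℝ) (U : Set (Euc m)),
      IsVSubOn G c univ u ∧ 0 < δ ∧ IsOpen U ∧ y₀ ∈ U ∧ IsVSubOn G (c - δ) U u }

end

/-!
Controllability provides, at every point of a compact set and for every error vector `e`, a control
whose fast velocity relative to a slowly moving target `y + t • v` does not increase `‖e‖` to first
order; by compactness finitely many controls suffice, so these velocities are bounded. If such a
control is chosen at the beginning of each sampling period of length `h` and held during it, the
squared error grows by `O(h²)` per period, hence by `O(h)` over `[0, T]`: the fast variable follows
the segment from `y` to `z` as closely as desired, provided that the slow variable stays in the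
compact set. It does so if `ε Q₀ T ≤ 1`, and then `z` is reached up to `ε`. If `ε Q₀ T > 1`,
then remaining within distance `1` of `y` is enough, because the final error `1 + 2 R₂` is already
bounded by a multiple of `ε`.
-/

open scoped NNReal

section DescentDirections

variable {V : Type*} [NormedAddCommGroup V] [InnerProductSpace ℝ V]

theorem exists_inner_lt_of_ball_subset_closure_convexHull {S : Set V} {r c : ℝ} (hc : 0 ≤ c)
    (hcr : c < r) (hS : ball 0 r ⊆ closure (convexHull ℝ S)) {e : V} (he : e ≠ 0) :
    ∃ w ∈ S, ⟪e, w⟫ < -(c * ‖e‖) := by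
  by_contra! hge
  have hconvex : Convex ℝ {w : V | -(c * ‖e‖) ≤ ⟪e, w⟫} :=
    convex_halfSpace_ge (innerₗ V e).isLinear _
  have hclosed : IsClosed {w : V | -(c * ‖e‖) ≤ ⟪e, w⟫} := isClosed_le (by fun_prop) (by fun_prop)
  have hhalf : ball 0 r ⊆ {w : V | -(c * ‖e‖) ≤ ⟪e, w⟫} :=
    hS.trans (closure_minimal (convexHull_min hge hconvex) hclosed)
  obtain ⟨ρ, hcρ, hρr⟩ := exists_between hcr
  have hρ : 0 ≤ ρ := hc.trans hcρ.le
  have he' : 0 < ‖e‖ := norm_pos_iff.mpr he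
  have hmem : (-(ρ / ‖e‖)) • e ∈ ball (0 : V) r := by
    rw [mem_ball_zero_iff, norm_smul, norm_neg, Real.norm_of_nonneg (by positivity),
      div_mul_cancel₀ _ he'.ne']
    exact hρr
  have hle : -(c * ‖e‖) ≤ -(ρ / ‖e‖) * (‖e‖ * ‖e‖) := by
    simpa only [mem_ofPred_eq, real_inner_smul_right, real_inner_self_eq_norm_mul_norm]
      using hhalf hmem
  have hval : -(ρ / ‖e‖) * (‖e‖ * ‖e‖) = -(ρ * ‖e‖) := by field_simp
  nlinarith

variable [ProperSpace V] {Z ι : Type*} [TopologicalSpace Z] {K : Set Z} {g : ι → Z → V} {r c : ℝ}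

theorem exists_finset_forall_inner_le (hK : IsCompact K) (hg : ∀ i, Continuous (g i))
    (hc : 0 ≤ c) (hcr : c < r)
    (hball : ∀ z ∈ K, ball 0 r ⊆ closure (convexHull ℝ (range fun i => g i z))) :
    ∃ s : Finset ι, ∀ z ∈ K, ∀ e : V, ∃ i ∈ s, ⟪e, g i z⟫ ≤ -(c * ‖e‖) := by
  classical
  rcases K.eq_empty_or_nonempty with rfl | ⟨z₀, hz₀⟩
  · exact ⟨∅, by simp⟩
  have hcover : K ×ˢ sphere (0 : V) 1 ⊆ ⋃ i, {p | ⟪p.2, g i p.1⟫ < -(c * ‖p.2‖)} := by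
    rintro ⟨z, e⟩ ⟨hz, he⟩
    obtain ⟨_, ⟨i, rfl⟩, hi⟩ := exists_inner_lt_of_ball_subset_closure_convexHull hc hcr
      (hball z hz) (ne_zero_of_mem_unit_sphere ⟨e, he⟩)
    exact mem_iUnion.mpr ⟨i, hi⟩
  obtain ⟨s, hs⟩ := (hK.prod (isCompact_sphere (0 : V) 1)).elim_finite_subcover _
    (fun i => isOpen_lt (by fun_prop) (by fun_prop)) hcover
  obtain ⟨_, i₀, -⟩ : (range fun i => g i z₀).Nonempty :=
    convexHull_nonempty_iff.mp <| closure_nonempty_iff.mp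
      ⟨0, hball z₀ hz₀ (mem_ball_self (hc.trans_lt hcr))⟩
  refine ⟨insert i₀ s, fun z hz e => ?_⟩
  rcases eq_or_ne e 0 with rfl | he
  · exact ⟨i₀, Finset.mem_insert_self _ _, by simp⟩
  have hunit : ‖‖e‖⁻¹ • e‖ = 1 := norm_smul_inv_norm he
  obtain ⟨i, hi, hlt⟩ := mem_iUnion₂.mp
    (hs (show (z, ‖e‖⁻¹ • e) ∈ K ×ˢ sphere (0 : V) 1 from ⟨hz, mem_sphere_zero_iff_norm.mpr hunit⟩))
  refine ⟨i, Finset.mem_insert_of_mem hi, ?_⟩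
  rw [mem_ofPred_eq, hunit, real_inner_smul_left, inv_mul_lt_iff₀ (norm_pos_iff.mpr he)] at hlt
  linarith

theorem exists_bounded_selection (hK : IsCompact K) (hg : ∀ i, Continuous (g i))
    (hc : 0 ≤ c) (hcr : c < r)
    (hball : ∀ z ∈ K, ball 0 r ⊆ closure (convexHull ℝ (range fun i => g i z))) :
    ∃ B, ∀ z ∈ K, ∀ v : V, ‖v‖ ≤ c → ∀ e : V, ∃ i, ⟪e, g i z - v⟫ ≤ 0 ∧ ‖g i z‖ ≤ B := by
  obtain ⟨s, hs⟩ := exists_finset_forall_inner_le hK hg hc hcr hball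
  choose bound hbound using fun i => hK.exists_bound_of_continuousOn (hg i).continuousOn
  obtain ⟨B, hB⟩ := Finset.exists_le (s.image bound)
  refine ⟨B, fun z hz v hv e => ?_⟩
  obtain ⟨i, hi, hinner⟩ := hs z hz e
  refine ⟨i, ?_, (hbound i z hz).trans (hB _ (Finset.mem_image_of_mem _ hi))⟩
  have hev : -⟪e, v⟫ ≤ ‖e‖ * c :=
    ((neg_le_abs _).trans (abs_real_inner_le_norm e v)).trans (by gcongr)
  rw [inner_sub_right]
  linarith

end DescentDirections

section LipschitzFlow

variable {E : Type*} [NormedAddCommGroup E] [NormedSpace ℝ E] {F : E → E} {L : ℝ≥0}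

theorem exists_isIntegralCurveOn_Icc_of_lipschitzWith [CompleteSpace E] (hF : LipschitzWith L F)
    {h : ℝ} (hh : 0 ≤ h) (hLh : 2 * L * h ≤ 1) (x : E) :
    ∃ φ : ℝ → E, φ 0 = x ∧ IsIntegralCurveOn φ (fun _ => F) (Icc 0 h) := by
  lift h to ℝ≥0 using hh
  let ρ : ℝ≥0 := 2 * h * ‖F x‖₊
  have hbound : ∀ y ∈ closedBall x ρ, ‖F y‖ ≤ ↑(‖F x‖₊ + L * ρ) := fun y hy => by
    have hy' : ‖y - x‖ ≤ ρ := mem_closedBall_iff_norm.mp hy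
    calc ‖F y‖ ≤ ‖F x‖ + ‖F y - F x‖ := norm_le_insert' _ _
      _ ≤ ‖F x‖ + L * ‖y - x‖ := by gcongr; exact hF.norm_sub_le y x
      _ ≤ ‖F x‖ + L * ρ := by gcongr
  have hfit : (‖F x‖₊ + L * ρ : ℝ) * h ≤ ρ := by
    simp only [ρ, NNReal.coe_mul, NNReal.coe_ofNat, coe_nnnorm]
    nlinarith [mul_nonneg (norm_nonneg (F x)) h.coe_nonneg]
  have hpl : IsPicardLindelof (fun _ => F) (tmin := 0) (tmax := h) ⟨0, left_mem_Icc.mpr h.2⟩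
      x ρ 0 (‖F x‖₊ + L * ρ) L :=
    .of_time_independent hbound hF.lipschitzOnWith (by simpa using hfit)
  exact hpl.exists_eq_forall_mem_Icc_hasDerivWithinAt₀

variable {X : ℝ → E} {t₀ t₁ : ℝ}

theorem norm_sub_le_of_isIntegralCurveOn (hF : LipschitzWith L F)
    (hX : IsIntegralCurveOn X (fun _ => F) (Icc t₀ t₁)) (hLt : 2 * L * (t₁ - t₀) ≤ 1) {t : ℝ}
    (ht : t ∈ Icc t₀ t₁) : ‖X t - X t₀‖ ≤ 2 * ‖F (X t₀)‖ * (t₁ - t₀) := by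
  obtain ⟨τ, hτ, hmax⟩ := isCompact_Icc.exists_isMaxOn ⟨t, ht⟩
    (hX.continuousOn.sub continuousOn_const).norm
  have hspeed : ∀ s ∈ Icc t₀ t₁, ‖F (X s)‖ ≤ ‖F (X t₀)‖ + L * ‖X τ - X t₀‖ := fun s hs =>
    calc ‖F (X s)‖ ≤ ‖F (X t₀)‖ + ‖F (X s) - F (X t₀)‖ := norm_le_insert' _ _
      _ ≤ ‖F (X t₀)‖ + L * ‖X s - X t₀‖ := by gcongr; exact hF.norm_sub_le _ _
      _ ≤ ‖F (X t₀)‖ + L * ‖X τ - X t₀‖ := by gcongr; exact hmax hs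
  have hmean := norm_image_sub_le_of_norm_deriv_le_segment' hX
    (fun s hs => hspeed s (Ico_subset_Icc_self hs)) τ hτ
  have hτ₁ : τ - t₀ ≤ t₁ - t₀ := sub_le_sub_right hτ.2 _
  have hself : ‖X τ - X t₀‖ ≤ (‖F (X t₀)‖ + L * ‖X τ - X t₀‖) * (t₁ - t₀) :=
    hmean.trans (by gcongr)
  have htτ : ‖X t - X t₀‖ ≤ ‖X τ - X t₀‖ := hmax ht
  nlinarith [norm_nonneg (X τ - X t₀)]

theorem norm_sub_euler_step_le_of_isIntegralCurveOn (hF : LipschitzWith L F)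
    (hX : IsIntegralCurveOn X (fun _ => F) (Icc t₀ t₁)) (hLt : 2 * L * (t₁ - t₀) ≤ 1)
    (ht : t₀ ≤ t₁) :
    ‖X t₁ - X t₀ - (t₁ - t₀) • F (X t₀)‖ ≤ 2 * L * ‖F (X t₀)‖ * (t₁ - t₀) ^ 2 := by
  have hderiv : ∀ t ∈ Icc t₀ t₁, HasDerivWithinAt (fun s => X s - s • F (X t₀))
      (F (X t) - F (X t₀)) (Icc t₀ t₁) t := fun t ht => by
    simpa using (hX t ht).fun_sub ((hasDerivWithinAt_id t _).smul_const (F (X t₀)))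
  have hbound : ∀ t ∈ Ico t₀ t₁,
      ‖F (X t) - F (X t₀)‖ ≤ L * (2 * ‖F (X t₀)‖ * (t₁ - t₀)) := fun t ht =>
    (hF.norm_sub_le _ _).trans <| by
      gcongr
      exact norm_sub_le_of_isIntegralCurveOn hF hX hLt (Ico_subset_Icc_self ht)
  calc ‖X t₁ - X t₀ - (t₁ - t₀) • F (X t₀)‖
      = ‖X t₁ - t₁ • F (X t₀) - (X t₀ - t₀ • F (X t₀))‖ := by congr 1; module
    _ ≤ L * (2 * ‖F (X t₀)‖ * (t₁ - t₀)) * (t₁ - t₀) :=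
        norm_image_sub_le_of_norm_deriv_le_segment' hderiv hbound t₁ (right_mem_Icc.mpr ht)
    _ = 2 * L * ‖F (X t₀)‖ * (t₁ - t₀) ^ 2 := by ring

end LipschitzFlow

section SampledControl

variable {E ι : Type*} {h : ℝ} {n : ℕ} {t : ℝ}

/-- The zero-order hold of a sequence `a` with sampling period `h`: the piecewise constant function
equal to `a n` on `[n * h, (n + 1) * h)`. It is meant for `0 < h` and `0 ≤ t`. -/
noncomputable def sampleHold (h : ℝ) (a : ℕ → ι) (t : ℝ) : ι := a ⌊t / h⌋₊

theorem measurable_sampleHold [MeasurableSpace ι] (h : ℝ) (a : ℕ → ι) :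
    Measurable (sampleHold h a) :=
  measurable_from_top.comp (Nat.measurable_floor.comp (measurable_id.div_const h))

theorem floor_div_eq_of_mem_Ico (hh : 0 < h) (ht : t ∈ Ico (n * h) ((n + 1) * h)) :
    ⌊t / h⌋₊ = n := by
  have ht₀ : 0 ≤ t := (by positivity : 0 ≤ n * h).trans ht.1
  rw [Nat.floor_eq_iff (div_nonneg ht₀ hh.le), le_div_iff₀ hh, div_lt_iff₀ hh]
  exact ht

theorem mem_Icc_floor_div (hh : 0 < h) (ht : 0 ≤ t) :
    t ∈ Icc (⌊t / h⌋₊ * h) ((⌊t / h⌋₊ + 1) * h) :=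
  ⟨(le_div_iff₀ hh).mp (Nat.floor_le (div_nonneg ht hh.le)),
    ((div_lt_iff₀ hh).mp (Nat.lt_floor_add_one _)).le⟩

theorem exists_eq_sub_on_Icc_of_chain (hh : 0 < h) {φ : ℕ → ℝ → E}
    (hφ : ∀ n, φ (n + 1) 0 = φ n h) :
    ∃ X : ℝ → E, ∀ n : ℕ, ∀ t ∈ Icc (n * h) ((n + 1) * h), X t = φ n (t - n * h) := by
  refine ⟨fun t => φ ⌊t / h⌋₊ (t - ⌊t / h⌋₊ * h), fun n t ht => ?_⟩
  rcases ht.2.eq_or_lt with rfl | hlt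
  · have hfloor : ⌊((n : ℝ) + 1) * h / h⌋₊ = n + 1 := by
      rw [mul_div_cancel_right₀ _ hh.ne']
      exact_mod_cast Nat.floor_natCast (n + 1)
    simp only [hfloor, Nat.cast_add, Nat.cast_one, sub_self, hφ]
    congr 1
    ring
  · simp only [floor_div_eq_of_mem_Ico hh ⟨ht.1, hlt⟩]

variable [NormedAddCommGroup E] [NormedSpace ℝ E]

/-- `X` solves the controlled equation `X' = F (a n) X` on the `n`-th sampling interval
`[n * h, (n + 1) * h]`, for every `n`. The derivatives are one-sided at the sampling times. -/
def IsSampledSolution (F : ι → E → E) (h : ℝ) (a : ℕ → ι) (X : ℝ → E) : Prop :=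
  ∀ n : ℕ, IsIntegralCurveOn X (fun _ => F (a n)) (Icc (n * h) ((n + 1) * h))

variable {F : ι → E → E} {L : ℝ≥0} {a : ℕ → ι} {X : ℝ → E}

theorem exists_isSampledSolution_of_feedback [CompleteSpace E] (hF : ∀ i, LipschitzWith L (F i))
    (hh : 0 < h) (hLh : 2 * L * h ≤ 1) (κ : ℕ → E → ι) (x : E) :
    ∃ a X, X 0 = x ∧ (∀ n : ℕ, a n = κ n (X (n * h))) ∧ IsSampledSolution F h a X := by
  choose φ hφ₀ hφ using fun i =>
    exists_isIntegralCurveOn_Icc_of_lipschitzWith (hF i) hh.le hLh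
  let node : ℕ → E := fun n => n.rec x fun m p => φ (κ m p) p h
  let a : ℕ → ι := fun n => κ n (node n)
  obtain ⟨X, hX⟩ := exists_eq_sub_on_Icc_of_chain hh (φ := fun n => φ (a n) (node n))
    fun n => hφ₀ (a (n + 1)) (node (n + 1))
  have hnode : ∀ n : ℕ, X (n * h) = node n := fun n => by
    rw [hX n _ ⟨le_rfl, by linarith⟩, sub_self, hφ₀]
  refine ⟨a, X, by simpa [node] using hnode 0, fun n => by rw [hnode], fun n t ht => ?_⟩
  have hshift := (hφ (a n) (node n)).comp_sub (n * h)
  rw [vadd_Icc, add_zero, ← add_one_mul] at hshift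
  have hderiv := (hshift t ht).congr (hX n) (hX n t ht)
  simpa only [Function.comp_apply, hX n t ht] using hderiv

namespace IsSampledSolution

variable [CompleteSpace E]

theorem integral_eq_sub_of_mem_Icc (hX : IsSampledSolution F h a X)
    (hF : ∀ i, Continuous (F i)) (hh : 0 < h) (ht : t ∈ Icc (n * h) ((n + 1) * h)) :
    IntervalIntegrable (fun s => F (sampleHold h a s) (X s)) volume (n * h) t ∧
      ∫ s in (n * h)..t, F (sampleHold h a s) (X s) = X t - X (n * h) := by
  have hsub : Icc (n * h) t ⊆ Icc (n * h) ((n + 1) * h) := Icc_subset_Icc_right ht.2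
  have hcurve : IsIntegralCurveOn X (fun _ => F (a n)) (Icc (n * h) t) := (hX n).mono hsub
  have hhold : EqOn (fun s => F (a n) (X s)) (fun s => F (sampleHold h a s) (X s))
      (Ioo (n * h) t) := fun s hs => by
    simp only [sampleHold, floor_div_eq_of_mem_Ico hh ⟨hs.1.le, hs.2.trans_le ht.2⟩]
  have hint : IntervalIntegrable (fun s => F (a n) (X s)) volume (n * h) t :=
    ((hF (a n)).comp_continuousOn hcurve.continuousOn).intervalIntegrable_of_Icc ht.1
  refine ⟨hint.congr_uIoo (uIoo_of_le ht.1 ▸ hhold), ?_⟩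
  rw [← intervalIntegral.integral_congr_Ioo_of_le ht.1 hhold]
  exact intervalIntegral.integral_eq_sub_of_hasDerivAt_of_le ht.1 hcurve.continuousOn
    (fun s hs => (hcurve s (Ioo_subset_Icc_self hs)).hasDerivAt (Icc_mem_nhds hs.1 hs.2)) hint

theorem integral_eq_sub (hX : IsSampledSolution F h a X) (hF : ∀ i, Continuous (F i))
    (hh : 0 < h) (ht : 0 ≤ t) :
    IntervalIntegrable (fun s => F (sampleHold h a s) (X s)) volume 0 t ∧
      ∫ s in (0 : ℝ)..t, F (sampleHold h a s) (X s) = X t - X 0 := by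
  suffices hpieces : ∀ n : ℕ, ∀ t ∈ Icc (n * h) ((n + 1) * h),
      IntervalIntegrable (fun s => F (sampleHold h a s) (X s)) volume 0 t ∧
        ∫ s in (0 : ℝ)..t, F (sampleHold h a s) (X s) = X t - X 0 from
    hpieces _ t (mem_Icc_floor_div hh ht)
  intro n
  induction n with
  | zero => exact fun t ht => by simpa using hX.integral_eq_sub_of_mem_Icc hF hh ht
  | succ n ih =>
    intro t ht
    obtain ⟨hint, heq⟩ := ih ((n + 1 : ℕ) * h) (by push_cast; exact ⟨by linarith, le_rfl⟩)
    obtain ⟨hint', heq'⟩ := hX.integral_eq_sub_of_mem_Icc hF hh ht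
    refine ⟨hint.trans hint', ?_⟩
    rw [← intervalIntegral.integral_add_adjacent_intervals hint hint', heq, heq']
    abel

theorem integral_clm_eq_sub {G : Type*} [NormedAddCommGroup G] [NormedSpace ℝ G] [CompleteSpace G]
    (hX : IsSampledSolution F h a X) (hF : ∀ i, Continuous (F i)) (hh : 0 < h) (ht : 0 ≤ t)
    (ℓ : E →L[ℝ] G) :
    IntervalIntegrable (fun s => ℓ (F (sampleHold h a s) (X s))) volume 0 t ∧
      ∫ s in (0 : ℝ)..t, ℓ (F (sampleHold h a s) (X s)) = ℓ (X t) - ℓ (X 0) := by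
  obtain ⟨hint, heq⟩ := hX.integral_eq_sub hF hh ht
  exact ⟨⟨ℓ.integrable_comp hint.1, ℓ.integrable_comp hint.2⟩,
    by rw [ℓ.intervalIntegral_comp_comm hint, heq, map_sub]⟩

theorem norm_clm_sub_le {G : Type*} [NormedAddCommGroup G] [NormedSpace ℝ G] [CompleteSpace G]
    (hX : IsSampledSolution F h a X) (hF : ∀ i, Continuous (F i)) (hh : 0 < h) (ht : 0 ≤ t)
    (ℓ : E →L[ℝ] G) {q : ℝ} (hq : ∀ i p, ‖ℓ (F i p)‖ ≤ q) : ‖ℓ (X t) - ℓ (X 0)‖ ≤ q * t := by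
  rw [← (hX.integral_clm_eq_sub hF hh ht ℓ).2]
  simpa only [sub_zero, abs_of_nonneg ht] using
    intervalIntegral.norm_integral_le_of_norm_le_const fun s (_ : s ∈ uIoc 0 t) => hq _ _

end IsSampledSolution

end SampledControl

section Tracking

variable {E V ι : Type*} [NormedAddCommGroup E] [NormedSpace ℝ E] [NormedAddCommGroup V]
  [InnerProductSpace ℝ V] {L : ℝ≥0} {X : ℝ → E × V} {x : E} {y v : V} {h q B δ T : ℝ}

theorem norm_add_smul_add_sq_le {e u p : V} (hh : 0 ≤ h) (heu : ⟪e, u⟫ ≤ 0) :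
    ‖e + (h • u + p)‖ ^ 2 ≤ ‖e‖ ^ 2 + 2 * (‖e‖ * ‖p‖) + ‖h • u + p‖ ^ 2 := by
  rw [norm_add_sq_real, inner_add_right, real_inner_smul_right]
  have hep : ⟪e, p⟫ ≤ ‖e‖ * ‖p‖ := real_inner_le_norm e p
  have hheu : h * ⟪e, u⟫ ≤ 0 := mul_nonpos_of_nonneg_of_nonpos hh heu
  linarith

theorem sq_norm_snd_sub_le_of_isIntegralCurveOn {F : E × V → E × V} {t₀ t₁ : ℝ} {c : V}
    (hF : LipschitzWith L F) (hX : IsIntegralCurveOn X (fun _ => F) (Icc t₀ t₁))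
    (hLt : 2 * L * (t₁ - t₀) ≤ 1) (ht : t₀ ≤ t₁) (herr : ‖(X t₀).2 - c‖ ≤ δ)
    (hdescent : ⟪(X t₀).2 - c, (F (X t₀)).2 - v⟫ ≤ 0) (hB : ‖F (X t₀)‖ ≤ B) :
    ‖(X t₁).2 - (c + (t₁ - t₀) • v)‖ ^ 2 ≤
      ‖(X t₀).2 - c‖ ^ 2 + (4 * L * B * δ + (2 * B + ‖v‖) ^ 2) * (t₁ - t₀) ^ 2 := by
  have hh : 0 ≤ t₁ - t₀ := sub_nonneg.mpr ht
  have heuler := norm_sub_euler_step_le_of_isIntegralCurveOn hF hX hLt ht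
  generalize t₁ - t₀ = h at *
  let p := X t₁ - X t₀ - h • F (X t₀)
  let u := (F (X t₀)).2 - v
  have hB₀ : 0 ≤ B := (norm_nonneg _).trans hB
  have hδ : 0 ≤ δ := (norm_nonneg _).trans herr
  have hp : ‖p.2‖ ≤ 2 * L * B * h ^ 2 := (norm_snd_le p).trans (heuler.trans (by gcongr))
  have hp' : ‖p.2‖ ≤ B * h := hp.trans (by nlinarith [mul_nonneg hB₀ hh])
  have hu : ‖u‖ ≤ B + ‖v‖ := (norm_sub_le _ _).trans (by gcongr; exact (norm_snd_le _).trans hB)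
  have hincr : ‖h • u + p.2‖ ≤ (2 * B + ‖v‖) * h :=
    calc ‖h • u + p.2‖ ≤ ‖h • u‖ + ‖p.2‖ := norm_add_le _ _
      _ ≤ h * (B + ‖v‖) + B * h := by rw [norm_smul, Real.norm_of_nonneg hh]; gcongr
      _ = (2 * B + ‖v‖) * h := by ring
  have hdecomp : (X t₁).2 - (c + h • v) = (X t₀).2 - c + (h • u + p.2) := by
    simp only [u, p, Prod.snd_sub, Prod.smul_snd]
    module
  calc ‖(X t₁).2 - (c + h • v)‖ ^ 2
      ≤ ‖(X t₀).2 - c‖ ^ 2 + 2 * (‖(X t₀).2 - c‖ * ‖p.2‖) + ‖h • u + p.2‖ ^ 2 := by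
        rw [hdecomp]; exact norm_add_smul_add_sq_le hh hdescent
    _ ≤ ‖(X t₀).2 - c‖ ^ 2 + 2 * (δ * (2 * L * B * h ^ 2)) + ((2 * B + ‖v‖) * h) ^ 2 := by gcongr
    _ = ‖(X t₀).2 - c‖ ^ 2 + (4 * L * B * δ + (2 * B + ‖v‖) ^ 2) * h ^ 2 := by ring

variable {F : ι → E × V → E × V} {a : ℕ → ι}

theorem IsSampledSolution.norm_snd_sub_le (hX : IsSampledSolution F h a X)
    (hF : ∀ i, LipschitzWith L (F i)) (hh : 0 ≤ h) (hLh : 2 * L * h ≤ 1) (hB : 0 ≤ B) (hδ : 0 ≤ δ)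
    (hy : (X 0).2 = y) {m : ℕ}
    (hm : m * ((4 * L * B * δ + (2 * B + ‖v‖) ^ 2) * h ^ 2) ≤ δ ^ 2)
    (hfeedback : ∀ n < m, ‖(X (n * h)).2 - (y + (n * h) • v)‖ ≤ δ →
      ⟪(X (n * h)).2 - (y + (n * h) • v), (F (a n) (X (n * h))).2 - v⟫ ≤ 0 ∧
        ‖F (a n) (X (n * h))‖ ≤ B) :
    ‖(X (m * h)).2 - (y + (m * h) • v)‖ ≤ δ := by
  set C := (4 * L * B * δ + (2 * B + ‖v‖) ^ 2) * h ^ 2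
  suffices hsq : ∀ n ≤ m, ‖(X (n * h)).2 - (y + (n * h) • v)‖ ^ 2 ≤ n * C from
    sq_le_sq₀ (norm_nonneg _) hδ |>.mp ((hsq m le_rfl).trans hm)
  intro n
  induction n with
  | zero => simp [hy]
  | succ n ih =>
    intro hn
    have hC : 0 ≤ C := by positivity
    have herr : ‖(X (n * h)).2 - (y + (n * h) • v)‖ ≤ δ := by
      refine sq_le_sq₀ (norm_nonneg _) hδ |>.mp ?_
      refine (ih (by lia)).trans (le_trans ?_ hm)
      exact mul_le_mul_of_nonneg_right (mod_cast n.le_of_succ_le hn) hC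
    obtain ⟨hdescent, hspeed⟩ := hfeedback n hn herr
    have hlen : ((n : ℝ) + 1) * h - n * h = h := by ring
    have hstep := sq_norm_snd_sub_le_of_isIntegralCurveOn (hF (a n)) (hX n) (by rwa [hlen])
      (by linarith) herr hdescent hspeed
    rw [hlen, add_assoc y, ← add_smul, ← add_one_mul] at hstep
    push_cast
    linarith [ih (by lia)]

theorem exists_nat_div_small (K C T : ℝ) (hδ : 0 < δ) :
    ∃ m : ℕ, 0 < m ∧ K * (T / m) ≤ 1 ∧ m * (C * (T / m) ^ 2) ≤ δ ^ 2 := by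
  obtain ⟨m, hm⟩ := exists_nat_gt (max 0 (max (K * T) (C * T ^ 2 / δ ^ 2)))
  simp only [max_lt_iff] at hm
  obtain ⟨hm₀, hmK, hmC⟩ := hm
  refine ⟨m, mod_cast hm₀, ?_, ?_⟩
  · rw [← mul_div_assoc, div_le_one hm₀]
    exact hmK.le
  · have hCT : m * (C * (T / m) ^ 2) = C * T ^ 2 / m := by field_simp
    rw [hCT]
    exact ((div_lt_comm₀ (by positivity) hm₀).mp hmC).le

theorem exists_isSampledSolution_tracking [CompleteSpace E] [CompleteSpace V]
    (hF : ∀ i, LipschitzWith L (F i)) (hq : 0 ≤ q) (hFq : ∀ i p, ‖(F i p).1‖ ≤ q) (hT : 0 < T)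
    (hδ : 0 < δ)
    (hsel : ∀ t ∈ Icc 0 T, ∀ p : E × V, ‖p.1 - x‖ ≤ q * T → ‖p.2 - (y + t • v)‖ ≤ δ →
      ∃ i, ⟪p.2 - (y + t • v), (F i p).2 - v⟫ ≤ 0 ∧ ‖F i p‖ ≤ B) :
    ∃ h > 0, ∃ a X, X 0 = (x, y) ∧ IsSampledSolution F h a X ∧ ‖(X T).2 - (y + T • v)‖ ≤ δ := by
  obtain ⟨i₀, -, hi₀⟩ := hsel 0 (left_mem_Icc.mpr hT.le) (x, y)
    (by simpa using mul_nonneg hq hT.le) (by simpa using hδ.le)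
  have hB : 0 ≤ B := (norm_nonneg _).trans hi₀
  let C : ℝ := 4 * L * B * δ + (2 * B + ‖v‖) ^ 2
  obtain ⟨m, hm₀, hLh, herror⟩ := exists_nat_div_small (2 * L) C T hδ
  let h : ℝ := T / m
  have hh : 0 < h := by positivity
  have hmh : m * h = T := mul_div_cancel₀ T (by positivity)
  have hfeedback : ∀ (n : ℕ) (p : E × V), ∃ i, n * h ∈ Icc 0 T → ‖p.1 - x‖ ≤ q * T →
      ‖p.2 - (y + (n * h) • v)‖ ≤ δ →
      ⟪p.2 - (y + (n * h) • v), (F i p).2 - v⟫ ≤ 0 ∧ ‖F i p‖ ≤ B := fun n p => by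
    by_cases htube : n * h ∈ Icc 0 T ∧ ‖p.1 - x‖ ≤ q * T ∧ ‖p.2 - (y + (n * h) • v)‖ ≤ δ
    · obtain ⟨i, hi⟩ := hsel _ htube.1 p htube.2.1 htube.2.2
      exact ⟨i, fun _ _ _ => hi⟩
    · exact ⟨i₀, fun ht hx hy => absurd ⟨ht, hx, hy⟩ htube⟩
  choose κ hκ using hfeedback
  obtain ⟨a, X, hX₀, ha, hX⟩ := exists_isSampledSolution_of_feedback hF hh hLh κ (x, y)
  refine ⟨h, hh, a, X, hX₀, hX, ?_⟩
  rw [← hmh]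
  refine hX.norm_snd_sub_le hF hh.le hLh hB hδ.le (by rw [hX₀]) herror fun n hn herr => ?_
  have hnT : n * h ∈ Icc 0 T := ⟨by positivity, by rw [← hmh]; gcongr⟩
  have hslow : ‖(X (n * h)).1 - x‖ ≤ q * (n * h) := by
    simpa [hX₀] using hX.norm_clm_sub_le (fun i => (hF i).continuous) hh hnT.1
      (ContinuousLinearMap.fst ℝ E V) hFq
  rw [ha n]
  exact hκ n _ hnT (hslow.trans (by gcongr; exact hnT.2)) herr

end Tracking

section SlowFastSystem

theorem lipschitzWith_of_norm_sub_le_add {E V G : Type*} [SeminormedAddCommGroup E]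
    [SeminormedAddCommGroup V] [SeminormedAddCommGroup G] {L : ℝ≥0} {φ : E → V → G}
    (hφ : ∀ x₁ x₂ y₁ y₂, ‖φ x₁ y₁ - φ x₂ y₂‖ ≤ L * (‖x₁ - x₂‖ + ‖y₁ - y₂‖)) :
    LipschitzWith (2 * L) fun p : E × V => φ p.1 p.2 :=
  .of_dist_le_mul fun p q => by
    rw [dist_eq_norm, dist_eq_norm]
    calc ‖φ p.1 p.2 - φ q.1 q.2‖ ≤ L * (‖(p - q).1‖ + ‖(p - q).2‖) := hφ _ _ _ _
      _ ≤ L * (‖p - q‖ + ‖p - q‖) := by gcongr; exacts [norm_fst_le _, norm_snd_le _]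
      _ = ↑(2 * L) * ‖p - q‖ := by push_cast; ring

variable {N M k : ℕ} {A : Set (Euc k)} {f : Euc N → Euc M → Euc k → Euc N}
  {g : Euc N → Euc M → Euc k → Euc M} {L Q : ℝ≥0} {ε h T R₂ : ℝ}

/-- The right-hand side of (CD_ε) as a family of vector fields on `ℝ^N × ℝ^M` indexed by the
control set. -/
def slowFastField (A : Set (Euc k)) (f : Euc N → Euc M → Euc k → Euc N)
    (g : Euc N → Euc M → Euc k → Euc M) (ε : ℝ) (a : A) (p : Euc N × Euc M) : Euc N × Euc M :=
  (ε • f p.1 p.2 a, g p.1 p.2 a)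

theorem isControl_sampleHold (h : ℝ) (a : ℕ → A) :
    IsControl A fun t => ((sampleHold h a t : A) : Euc k) :=
  ⟨measurable_subtype_coe.comp (measurable_sampleHold h a), fun t => (sampleHold h a t).2⟩

theorem IsSampledSolution.isTrajectory {a : ℕ → A} {X : ℝ → Euc N × Euc M}
    (hX : IsSampledSolution (slowFastField A f g ε) h a X)
    (hcont : ∀ a, Continuous (slowFastField A f g ε a)) (hh : 0 < h) (hε : ε ≠ 0) :
    IsTrajectory f g ε (fun t => (sampleHold h a t : A)) (fun t => (X t).1) (fun t => (X t).2) := by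
  have hslow := fun t (ht : 0 ≤ t) =>
    hX.integral_clm_eq_sub hcont hh ht (ContinuousLinearMap.fst ℝ (Euc N) (Euc M))
  have hfast := fun t (ht : 0 ≤ t) =>
    hX.integral_clm_eq_sub hcont hh ht (ContinuousLinearMap.snd ℝ (Euc N) (Euc M))
  refine ⟨fun t ht => ?_, fun t ht => (hfast t ht).1, fun t ht => ?_, fun t ht => ?_⟩
  · simpa [slowFastField, Pi.smul_def, inv_smul_smul₀ hε] using (hslow t ht).1.smul ε⁻¹
  · rw [← intervalIntegral.integral_smul]
    exact eq_add_of_sub_eq' (hslow t ht).2.symm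
  · exact eq_add_of_sub_eq' (hfast t ht).2.symm

/-- Assumptions (H2) and (H3) on the slow–fast system with control set `A`. -/
structure IsControllableSlowFast (A : Set (Euc k)) (f : Euc N → Euc M → Euc k → Euc N)
    (g : Euc N → Euc M → Euc k → Euc M) (L Q : ℝ≥0) : Prop where
  slow_lipschitz : ∀ x₁ x₂ y₁ y₂, ∀ a ∈ A,
    ‖f x₁ y₁ a - f x₂ y₂ a‖ ≤ L * (‖x₁ - x₂‖ + ‖y₁ - y₂‖)
  fast_lipschitz : ∀ x₁ x₂ y₁ y₂, ∀ a ∈ A,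
    ‖g x₁ y₁ a - g x₂ y₂ a‖ ≤ L * (‖x₁ - x₂‖ + ‖y₁ - y₂‖)
  slow_bounded : ∀ x y, ∀ a ∈ A, ‖f x y a‖ ≤ Q
  fast_controllable : ∀ K : Set (Euc N × Euc M), IsCompact K → ∃ r > 0, ∀ z ∈ K,
    ball (0 : Euc M) r ⊆ closure (convexHull ℝ ((fun a => g z.1 z.2 a) '' A))

/-- Some trajectory of (CD_ε) starting at `(x, y)` has its fast component within `δ` of `z` at
time `T`. -/
def SteersWithin (A : Set (Euc k)) (f : Euc N → Euc M → Euc k → Euc N)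
    (g : Euc N → Euc M → Euc k → Euc M) (ε T : ℝ) (x : Euc N) (y z : Euc M) (δ : ℝ) : Prop :=
  ∃ (α : ℝ → Euc k) (ξ : ℝ → Euc N) (η : ℝ → Euc M), IsControl A α ∧ IsTrajectory f g ε α ξ η ∧
    ξ 0 = x ∧ η 0 = y ∧ ‖η T - z‖ ≤ δ

theorem SteersWithin.of_norm_sub_add_le {x : Euc N} {y w z : Euc M} {δ δ' : ℝ}
    (hw : SteersWithin A f g ε T x y w δ) (hz : ‖w - z‖ + δ ≤ δ') :
    SteersWithin A f g ε T x y z δ' := by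
  obtain ⟨α, ξ, η, hα, hξη, hξ, hη, herr⟩ := hw
  exact ⟨α, ξ, η, hα, hξη, hξ, hη, by linarith [norm_sub_le_norm_sub_add_norm_sub (η T) w z]⟩

namespace IsControllableSlowFast

theorem lipschitzWith_slowFastField (hfg : IsControllableSlowFast A f g L Q) (ε : ℝ) (a : A) :
    LipschitzWith (max (‖ε‖₊ * (2 * L)) (2 * L)) (slowFastField A f g ε a) :=
  have hf := lipschitzWith_of_norm_sub_le_add fun x₁ x₂ y₁ y₂ =>
    hfg.slow_lipschitz x₁ x₂ y₁ y₂ a a.2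
  have hg := lipschitzWith_of_norm_sub_le_add fun x₁ x₂ y₁ y₂ =>
    hfg.fast_lipschitz x₁ x₂ y₁ y₂ a a.2
  ((lipschitzWith_smul ε).comp hf).prodMk hg

theorem exists_fast_selection (hfg : IsControllableSlowFast A f g L Q)
    {K : Set (Euc N × Euc M)} (hK : IsCompact K) :
    ∃ r > 0, ∃ B, ∀ p ∈ K, ∀ v : Euc M, ‖v‖ ≤ r → ∀ e : Euc M, ∃ a : A,
      ⟪e, g p.1 p.2 a - v⟫ ≤ 0 ∧ ‖g p.1 p.2 a‖ ≤ B := by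
  obtain ⟨r, hr, hball⟩ := hfg.fast_controllable K hK
  have hcont : ∀ a : A, Continuous fun p : Euc N × Euc M => g p.1 p.2 a := fun a =>
    (lipschitzWith_of_norm_sub_le_add fun x₁ x₂ y₁ y₂ =>
      hfg.fast_lipschitz x₁ x₂ y₁ y₂ a a.2).continuous
  refine ⟨r / 2, half_pos hr, ?_⟩
  exact exists_bounded_selection hK hcont (half_pos hr).le (half_lt_self hr)
    fun p hp => image_eq_range _ A ▸ hball p hp

theorem exists_steersWithin_add_smul (hfg : IsControllableSlowFast A f g L Q) (ρ₁ ρ₂ : ℝ) :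
    ∃ r > 0, ∀ (x : Euc N) (y v : Euc M) (ε T δ : ℝ), 0 < ε → 0 < T → 0 < δ → ‖v‖ ≤ r →
      ‖x‖ + ε * Q * T ≤ ρ₁ → (∀ t ∈ Icc 0 T, ‖y + t • v‖ + δ ≤ ρ₂) →
      SteersWithin A f g ε T x y (y + T • v) δ := by
  obtain ⟨r, hr, B, hB⟩ := hfg.exists_fast_selection
    ((isCompact_closedBall (0 : Euc N) ρ₁).prod (isCompact_closedBall (0 : Euc M) ρ₂))
  refine ⟨r, hr, fun x y v ε T δ hε hT hδ hv hρ₁ hρ₂ => ?_⟩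
  have hlip := hfg.lipschitzWith_slowFastField ε
  have hslow : ∀ (a : A) (p : Euc N × Euc M), ‖(slowFastField A f g ε a p).1‖ ≤ ε * Q :=
    fun a p => by
      rw [slowFastField, norm_smul, Real.norm_of_nonneg hε.le]
      gcongr
      exact hfg.slow_bounded _ _ _ a.2
  have hsel : ∀ t ∈ Icc 0 T, ∀ p : Euc N × Euc M, ‖p.1 - x‖ ≤ ε * Q * T →
      ‖p.2 - (y + t • v)‖ ≤ δ → ∃ a : A,
        ⟪p.2 - (y + t • v), (slowFastField A f g ε a p).2 - v⟫ ≤ 0 ∧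
          ‖slowFastField A f g ε a p‖ ≤ max (ε * Q) B := fun t ht p hx hy => by
    have hp₁ : ‖p.1‖ ≤ ρ₁ := by linarith [norm_le_insert' p.1 x]
    have hp₂ : ‖p.2‖ ≤ ρ₂ := by linarith [norm_le_insert' p.2 (y + t • v), hρ₂ t ht]
    obtain ⟨a, hdescent, hspeed⟩ :=
      hB p ⟨mem_closedBall_zero_iff.mpr hp₁, mem_closedBall_zero_iff.mpr hp₂⟩ v hv _
    exact ⟨a, hdescent, max_le_max (hslow a p) hspeed⟩
  obtain ⟨h, hh, a, X, hX₀, hX, herr⟩ :=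
    exists_isSampledSolution_tracking hlip (by positivity) hslow hT hδ hsel
  exact ⟨_, _, _, isControl_sampleHold h a,
    hX.isTrajectory (fun a => (hlip a).continuous) hh hε.ne', by simp [hX₀], by simp [hX₀], herr⟩

theorem exists_steersWithin_of_mul_le_one (hfg : IsControllableSlowFast A f g L Q) (R₁ : ℝ)
    (hR₂ : 0 < R₂) :
    ∃ T > 0, ∀ (x : Euc N) (y z : Euc M) (ε δ : ℝ), ‖x‖ < R₁ → ‖y‖ < R₂ → ‖z‖ < R₂ → 0 < ε →
      ε * Q * T ≤ 1 → 0 < δ → δ ≤ 1 → SteersWithin A f g ε T x y z δ := by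
  obtain ⟨r, hr, hsteer⟩ := hfg.exists_steersWithin_add_smul (R₁ + 1) (R₂ + 1)
  let T : ℝ := 2 * R₂ / r
  have hT : 0 < T := by positivity
  refine ⟨T, hT, fun x y z ε δ hx hy hz hε hεT hδ hδ₁ => ?_⟩
  have hspeed : ‖T⁻¹ • (z - y)‖ ≤ r := by
    rw [norm_smul, norm_inv, Real.norm_of_nonneg hT.le, inv_mul_le_iff₀ hT,
      div_mul_cancel₀ _ hr.ne']
    linarith [norm_sub_le z y]
  have hsegment : ∀ t ∈ Icc 0 T, ‖y + t • T⁻¹ • (z - y)‖ + δ ≤ R₂ + 1 := fun t ht => by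
    have hmem : y + (t * T⁻¹) • (z - y) ∈ ball 0 R₂ :=
      (convex_ball 0 R₂).add_smul_sub_mem (by simpa using hy) (by simpa using hz)
        ⟨mul_nonneg ht.1 (by positivity), by rw [mul_inv_le_iff₀ hT]; linarith [ht.2]⟩
    rw [smul_smul]
    linarith [mem_ball_zero_iff.mp hmem]
  simpa [smul_inv_smul₀ hT.ne'] using
    hsteer x y _ ε T δ hε hT hδ hspeed (by linarith) hsegment

theorem steersWithin_self (hfg : IsControllableSlowFast A f g L Q) (hT : 0 < T) {x : Euc N}
    {y : Euc M} (hε : 0 < ε) : SteersWithin A f g ε T x y y 1 := by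
  obtain ⟨r, hr, hsteer⟩ := hfg.exists_steersWithin_add_smul (‖x‖ + ε * Q * T) (‖y‖ + 1)
  simpa using hsteer x y 0 ε T 1 hε hT one_pos (by simpa using hr.le) le_rfl (by simp)

end IsControllableSlowFast

theorem statement3_general (hfg : IsControllableSlowFast A f g L Q) (R₁ : ℝ) (hR₂ : 0 < R₂) :
    ∃ T > 0, ∃ P > 0, ∀ (x : Euc N) (y z : Euc M) (ε : ℝ), ‖x‖ < R₁ → ‖y‖ < R₂ → ‖z‖ < R₂ →
      0 < ε → SteersWithin A f g ε T x y z (P * ε) := by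
  obtain ⟨T, hT, hreach⟩ := hfg.exists_steersWithin_of_mul_le_one R₁ hR₂
  refine ⟨T, hT, 1 + (1 + 2 * R₂) * Q * T, by positivity, fun x y z ε hx hy hz hε => ?_⟩
  rcases le_or_gt (ε * Q * T) 1 with hsmall | hlarge
  · have hreach_min : SteersWithin A f g ε T x y z (min ε 1) :=
      hreach x y z ε _ hx hy hz hε hsmall (lt_min hε one_pos) (min_le_right _ _)
    refine hreach_min.of_norm_sub_add_le ?_
    calc ‖z - z‖ + min ε 1 ≤ ε := by simp
      _ ≤ (1 + (1 + 2 * R₂) * Q * T) * ε :=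
          le_mul_of_one_le_left hε.le (le_add_of_nonneg_right (by positivity))
  · refine (hfg.steersWithin_self hT hε).of_norm_sub_add_le ?_
    calc ‖y - z‖ + 1 ≤ 1 + 2 * R₂ := by linarith [norm_sub_le y z]
      _ ≤ (1 + 2 * R₂) * (ε * Q * T) := le_mul_of_one_le_right (by positivity) hlarge.le
      _ ≤ (1 + (1 + 2 * R₂) * Q * T) * ε := by linarith

end SlowFastSystem

theorem statement3
    {N M k : ℕ} (A : Set (Euc k)) (hA : IsCompact A) (hAne : A.Nonempty)
    (f : Euc N → Euc M → Euc k → Euc N) (g : Euc N → Euc M → Euc k → Euc M)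
    (L0 Q0 : ℝ) (hL0 : 0 < L0) (hQ0 : 0 < Q0)
    (hfLip : ∀ (x₁ x₂ : Euc N) (y₁ y₂ : Euc M), ∀ a ∈ A,
      ‖f x₁ y₁ a - f x₂ y₂ a‖ ≤ L0 * (‖x₁ - x₂‖ + ‖y₁ - y₂‖))
    (hgLip : ∀ (x₁ x₂ : Euc N) (y₁ y₂ : Euc M), ∀ a ∈ A,
      ‖g x₁ y₁ a - g x₂ y₂ a‖ ≤ L0 * (‖x₁ - x₂‖ + ‖y₁ - y₂‖))
    (hfBdd : ∀ x y, ∀ a ∈ A, ‖f x y a‖ ≤ Q0)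
    (hctrl : ∀ K : Set (Euc N × Euc M), IsCompact K → ∃ r > 0, ∀ z ∈ K,
      Metric.ball (0 : Euc M) r ⊆ closure (convexHull ℝ ((fun a => g z.1 z.2 a) '' A)))
 :
    ∀ R1 R2 : ℝ, 0 < R1 → 0 < R2 →
      ∃ T0 > (0:ℝ), ∃ P > (0:ℝ), ∀ (x : Euc N) (y z : Euc M) (ε : ℝ),
        ‖x‖ < R1 → ‖y‖ < R2 → ‖z‖ < R2 → 0 < ε → ε ≤ 1 →
        ∃ (α : ℝ → Euc k) (ξ : ℝ → Euc N) (η : ℝ → Euc M) (T : ℝ),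
          IsControl A α ∧ IsTrajectory f g ε α ξ η ∧ ξ 0 = x ∧ η 0 = y ∧
          T0 < T ∧ T < 3 * T0 ∧ ‖η T - z‖ ≤ P * ε := by
  intro R1 R2 _ hR2
  obtain ⟨T, hT, P, hP, hsteer⟩ := statement3_general (L := ⟨L0, hL0.le⟩) (Q := ⟨Q0, hQ0.le⟩)
    ⟨hfLip, hgLip, hfBdd, hctrl⟩ R1 hR2
  refine ⟨T / 2, half_pos hT, P, hP, fun x y z ε hx hy hz hε _ => ?_⟩
  obtain ⟨α, ξ, η, hα, hξη, hξ, hη, herr⟩ := hsteer x y z ε hx hy hz hε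
  exact ⟨α, ξ, η, T, hα, hξη, hξ, hη, by linarith, by linarith, herr⟩
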